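/- Assume a_{ij}(ω) ≥ 0 for all i ≠ j and all ω ∈ Ω. Then for every ω ∈ Ω, every u₀ ∈ ℝᴺ, and every t ≥ 0 there holds ‖U_ω(t)u₀‖₁ ≤ exp( ∫₀ᵗ Σ_{i=1}^{N} max_{1≤j≤N} a_{ij}(θ_τ ω) dτ ) ‖u₀‖₁. If moreover ω ↦ max_{i,j} a_{ij}(ω) belongs to L₁(Ω, 𝔉, ℙ), then the functions ω ↦ sup_{0≤s≤1} ln⁺‖U_ω(s)‖ and ω ↦ sup_{0≤s≤1} ln⁺‖U_{θ_s ω}(1−s)‖ belong to L₁(Ω, 𝔉, ℙ). -/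

import Mathlib

open MeasureTheory Matrix Filter

/-- `ln⁺ x = max (ln x) 0` (with `Real.log 0 = 0`, so `ln⁺ 0 = 0`). -/
noncomputable def lnplus (x : ℝ) : ℝ := max (Real.log x) 0

/-- The Euclidean norm on `Fin N → ℝ`. -/
noncomputable def enorm' {N : ℕ} (u : Fin N → ℝ) : ℝ := Real.sqrt (∑ i, (u i) ^ 2)

/-- The ℓ¹ norm on `Fin N → ℝ`. -/
noncomputable def l1norm {N : ℕ} (u : Fin N → ℝ) : ℝ := ∑ i, |u i|

/-- The operator norm of a matrix with respect to the Euclidean norm. -/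
noncomputable def eopNorm {N : ℕ} (M : Matrix (Fin N) (Fin N) ℝ) : ℝ :=
  sSup {c : ℝ | ∃ u : Fin N → ℝ, enorm' u ≤ 1 ∧ c = enorm' (M.mulVec u)}

/-!
Cooperativity gives `sign(uᵢ) (A u)ᵢ ≤ ∑ⱼ aᵢⱼ |uⱼ| ≤ (maxⱼ aᵢⱼ) ‖u‖₁`, also at the diagonal entry,
whose sign is free. Hence `‖u‖₁` is an absolutely continuous function satisfying
`(‖u‖₁)' ≤ (∑ᵢ maxⱼ aᵢⱼ) ‖u‖₁` almost everywhere, and Grönwall's inequality is the a priori bound.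

Picard iteration converges to the solution on every interval, in a norm with an exponential weight.
This yields both uniqueness, hence the cocycle identity `U_{θ_s ω}(t) U_ω(s) = U_ω(t + s)`, and the
measurability of `U_ω(t)` in `ω`. By the cocycle identity `U_ω(s)` is invertible and
`U_{θ_s ω}(1 - s) = U_ω(1) U_ω(s)⁻¹` is continuous in `s`, so both suprema may be taken over a
countable dense set and are measurable. They are dominated by `ln N + N ∫₀¹ |m(θ_τ ω)| dτ` with
`m = maxᵢⱼ aᵢⱼ`, which is integrable because the flow preserves the measure.
-/

open Function Set
open scoped NNReal Topology

section AbsoluteContinuity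

variable {a b : ℝ}

lemma absolutelyContinuousOnInterval_comp_of_locallyLipschitz {X Y : Type*}
    [SeminormedAddCommGroup X] [PseudoMetricSpace Y] {φ : X → Y} {f : ℝ → X}
    (hφ : LocallyLipschitz φ) (hf : AbsolutelyContinuousOnInterval f a b) :
    AbsolutelyContinuousOnInterval (fun t => φ (f t)) a b := by
  obtain ⟨K, hK⟩ : ∃ K, LipschitzOnWith K φ (f '' uIcc a b) :=
    LocallyLipschitzOn.exists_lipschitzOnWith_of_compact
      (isCompact_uIcc.image_of_continuousOn hf.continuousOn) hφ.locallyLipschitzOn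
  have hlim : Tendsto (fun E : ℕ × (ℕ → ℝ × ℝ) ↦
      (K : ℝ) * ∑ i ∈ Finset.range E.1, dist (f (E.2 i).1) (f (E.2 i).2))
      (AbsolutelyContinuousOnInterval.totalLengthFilter ⊓
        𝓟 (AbsolutelyContinuousOnInterval.disjWithin a b)) (𝓝 0) := by
    simpa using Tendsto.const_mul (K : ℝ) hf
  refine squeeze_zero' (Eventually.of_forall fun E => Finset.sum_nonneg fun i _ => dist_nonneg)
    ?_ hlim
  filter_upwards [mem_inf_of_right (mem_principal_self _)] with E hE
  rw [Finset.mul_sum]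
  exact Finset.sum_le_sum fun i hi =>
    hK.dist_le_mul _ ⟨_, (hE.1 i hi).1, rfl⟩ _ ⟨_, (hE.1 i hi).2, rfl⟩

lemma absolutelyContinuousOnInterval_const {X : Type*} [PseudoMetricSpace X] (c : X) (a b : ℝ) :
    AbsolutelyContinuousOnInterval (fun _ : ℝ => c) a b :=
  (LipschitzWith.const c).lipschitzOnWith.absolutelyContinuousOnInterval

lemma absolutelyContinuousOnInterval_finsetSum {κ F : Type*} [SeminormedAddCommGroup F]
    {s : Finset κ} {f : κ → ℝ → F} (hf : ∀ i ∈ s, AbsolutelyContinuousOnInterval (f i) a b) :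
    AbsolutelyContinuousOnInterval (fun t => ∑ i ∈ s, f i t) a b := by
  classical
  induction s using Finset.induction_on with
  | empty => simpa using absolutelyContinuousOnInterval_const (0 : F) a b
  | insert i s hi ih =>
    simp only [Finset.sum_insert hi]
    exact (hf i (s.mem_insert_self i)).fun_add
      (ih fun j hj => hf j (Finset.mem_insert_of_mem hj))

lemma le_of_absolutelyContinuousOnInterval_of_deriv_nonpos {f : ℝ → ℝ} (hab : a ≤ b)
    (hf : AbsolutelyContinuousOnInterval f a b) (hf' : ∀ᵐ t, t ∈ uIcc a b → deriv f t ≤ 0) :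
    f b ≤ f a := by
  have h_neg : 0 ≤ ∫ t in a..b, -deriv f t := by
    refine intervalIntegral.integral_nonneg_of_ae_restrict hab
      ((ae_restrict_iff' measurableSet_Icc).2 ?_)
    filter_upwards [hf'] with t ht ht_mem
    exact neg_nonneg.2 (ht (Icc_subset_uIcc ht_mem))
  rw [intervalIntegral.integral_neg, hf.integral_deriv_eq_sub] at h_neg
  linarith

lemma le_exp_integral_mul_of_deriv_le {φ g : ℝ → ℝ} (hab : a ≤ b)
    (hφ : AbsolutelyContinuousOnInterval φ a b) (hg : IntervalIntegrable g volume a b)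
    (hφ' : ∀ᵐ t, t ∈ uIcc a b → deriv φ t ≤ g t * φ t) :
    φ b ≤ Real.exp (∫ t in a..b, g t) * φ a := by
  set G : ℝ → ℝ := fun t => ∫ s in a..t, g s with hG
  have hG_ac : AbsolutelyContinuousOnInterval G a b :=
    hg.absolutelyContinuousOnInterval_intervalIntegral left_mem_uIcc
  have h_exp : AbsolutelyContinuousOnInterval (fun t => Real.exp (-G t)) a b :=
    absolutelyContinuousOnInterval_comp_of_locallyLipschitz
      Real.contDiff_exp.locallyLipschitz hG_ac.fun_neg
  have h_le : Real.exp (-G b) * φ b ≤ Real.exp (-G a) * φ a := by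
    refine le_of_absolutelyContinuousOnInterval_of_deriv_nonpos hab (h_exp.fun_mul hφ) ?_
    filter_upwards [hφ.ae_differentiableAt, hg.ae_hasDerivAt_integral, hφ'] with t hφt hGt hle ht
    rw [((hGt ht a left_mem_uIcc).fun_neg.exp.fun_mul (hφt ht).hasDerivAt).deriv]
    linear_combination Real.exp (-G t) * hle ht
  simpa [hG, Real.exp_neg, inv_mul_le_iff₀ (Real.exp_pos _)] using h_le

lemma integral_mul_exp_integral {g : ℝ → ℝ} (hg : IntervalIntegrable g volume a b) :
    ∫ t in a..b, g t * Real.exp (∫ s in a..t, g s) = Real.exp (∫ s in a..b, g s) - 1 := by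
  have h_exp : AbsolutelyContinuousOnInterval (fun t => Real.exp (∫ s in a..t, g s)) a b :=
    absolutelyContinuousOnInterval_comp_of_locallyLipschitz Real.contDiff_exp.locallyLipschitz
      (hg.absolutelyContinuousOnInterval_intervalIntegral left_mem_uIcc)
  have h_ftc := h_exp.integral_deriv_eq_sub
  rw [intervalIntegral.integral_same, Real.exp_zero] at h_ftc
  rw [← h_ftc]
  refine intervalIntegral.integral_congr_ae ?_
  filter_upwards [hg.ae_hasDerivAt_integral] with t ht ht_mem
  rw [(ht (uIoc_subset_uIcc ht_mem) a left_mem_uIcc).exp.deriv, mul_comm]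

end AbsoluteContinuity

lemma deriv_abs_eq_sign_mul {f : ℝ → ℝ} {f' x : ℝ} (hf : HasDerivAt f f' x) :
    deriv (fun t => |f t|) x = SignType.sign (f x) * f' := by
  by_cases hfx : f x = 0
  -- `|f|` may fail to be differentiable at a zero of `f`, where its `deriv` is `0` by convention.
  · have h_min : IsLocalMin (fun t => |f t|) x := Eventually.of_forall fun t => by simp [hfx]
    simp [h_min.deriv_eq_zero, hfx]
  · exact ((hasDerivAt_abs hfx).comp x hf).deriv

section Caratheodory

variable {E : Type*} [NormedAddCommGroup E] [NormedSpace ℝ E]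
  {f : ℝ → E → E} {K : ℝ → ℝ≥0} {t₀ t T : ℝ} {c : E} {u v : ℝ → E}

/-- The Carathéodory–Lipschitz condition on the right-hand side of the equation `u' = f(t, u)`: each
`f t` is Lipschitz with a locally integrable constant `K t`. Measurability in `t` is encoded as
local integrability of `t ↦ f(t, u(t))` along continuous curves `u`. -/
structure IsCaratheodoryLipschitz (f : ℝ → E → E) (K : ℝ → ℝ≥0) : Prop where
  intervalIntegrable_comp : ∀ u : ℝ → E, Continuous u →
    ∀ a b, IntervalIntegrable (fun t => f t (u t)) volume a b
  intervalIntegrable_lipschitzConst : ∀ a b, IntervalIntegrable (fun t => (K t : ℝ)) volume a b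
  lipschitzWith : ∀ t, LipschitzWith (K t) (f t)

/-- `u` is a Carathéodory solution, on the whole line, of `u' = f(t, u)`, `u(t₀) = c`: a continuous
solution of the integral equation `u(t) = c + ∫ s in t₀..t, f(s, u(s))`. -/
structure IsCaratheodorySolution (f : ℝ → E → E) (t₀ : ℝ) (c : E) (u : ℝ → E) : Prop where
  continuous : Continuous u
  isFixedPt_picard : IsFixedPt (ODE.picard f t₀ c) u

lemma IsCaratheodorySolution.eq_add_integral (hu : IsCaratheodorySolution f t₀ c u) (t : ℝ) :
    u t = c + ∫ s in t₀..t, f s (u s) :=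
  (congrFun hu.isFixedPt_picard t).symm

lemma IsCaratheodorySolution.apply_initial (hu : IsCaratheodorySolution f t₀ c u) : u t₀ = c := by
  simpa using hu.eq_add_integral t₀

lemma IsCaratheodorySolution.comp_add_right (hf : IsCaratheodoryLipschitz f K)
    (hu : IsCaratheodorySolution f t₀ c u) (s : ℝ) :
    IsCaratheodorySolution (fun r => f (r + s)) 0 (u s) fun r => u (r + s) where
  continuous := hu.continuous.comp (continuous_add_const s)
  isFixedPt_picard := by
    funext t
    have h_int := hf.intervalIntegrable_comp u hu.continuous
    rw [ODE.picard_apply, intervalIntegral.integral_comp_add_right (fun r => f r (u r)), zero_add,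
      hu.eq_add_integral s, hu.eq_add_integral (t + s), add_assoc,
      intervalIntegral.integral_add_adjacent_intervals (h_int _ _) (h_int _ _)]

namespace IsCaratheodoryLipschitz

lemma continuous_picard (hf : IsCaratheodoryLipschitz f K) (hv : Continuous v) :
    Continuous (ODE.picard f t₀ c v) :=
  continuous_const.add
    (intervalIntegral.continuous_primitive (hf.intervalIntegrable_comp v hv) t₀)

/- The weight `exp (∫ 2K)` makes the Picard map a contraction on every interval, however long. -/
lemma norm_picard_sub_picard_le (hf : IsCaratheodoryLipschitz f K) (hu : Continuous u)
    (hv : Continuous v) (ht : t₀ ≤ t) {D : ℝ}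
    (hD : ∀ s ∈ Icc t₀ t, ‖v s - u s‖ ≤ D * Real.exp (∫ r in t₀..s, 2 * (K r : ℝ))) :
    ‖ODE.picard f t₀ c v t - ODE.picard f t₀ c u t‖ ≤
      D / 2 * Real.exp (∫ r in t₀..t, 2 * (K r : ℝ)) := by
  set W : ℝ → ℝ := fun s => Real.exp (∫ r in t₀..s, 2 * (K r : ℝ)) with hW
  have hK : ∀ a b, IntervalIntegrable (fun r => 2 * (K r : ℝ)) volume a b := fun a b =>
    (hf.intervalIntegrable_lipschitzConst a b).const_mul 2
  have hW_cont : Continuous W :=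
    Real.continuous_exp.comp (intervalIntegral.continuous_primitive hK t₀)
  have hD_nonneg : 0 ≤ D := by
    simpa using (norm_nonneg _).trans (hD t₀ ⟨le_rfl, ht⟩)
  have h_lip : ∀ s ∈ Ioc t₀ t, ‖f s (v s) - f s (u s)‖ ≤ D / 2 * (2 * K s * W s) := fun s hs =>
    calc ‖f s (v s) - f s (u s)‖ ≤ K s * ‖v s - u s‖ := (hf.lipschitzWith s).norm_sub_le _ _
      _ ≤ K s * (D * W s) := by gcongr; exact hD s (Ioc_subset_Icc_self hs)
      _ = D / 2 * (2 * K s * W s) := by ring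
  calc ‖ODE.picard f t₀ c v t - ODE.picard f t₀ c u t‖
      = ‖∫ s in t₀..t, (f s (v s) - f s (u s))‖ := by
        rw [ODE.picard_apply, ODE.picard_apply, add_sub_add_left_eq_sub,
          intervalIntegral.integral_sub (hf.intervalIntegrable_comp v hv t₀ t)
            (hf.intervalIntegrable_comp u hu t₀ t)]
    _ ≤ ∫ s in t₀..t, D / 2 * (2 * K s * W s) :=
        intervalIntegral.norm_integral_le_of_norm_le ht (Eventually.of_forall h_lip)
          (((hK t₀ t).mul_continuousOn hW_cont.continuousOn).const_mul _)
    _ = D / 2 * (W t - 1) := by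
        rw [intervalIntegral.integral_const_mul, hW, integral_mul_exp_integral (hK t₀ t)]
    _ ≤ D / 2 * W t := by gcongr; linarith

lemma continuous_iterate_picard (hf : IsCaratheodoryLipschitz f K) (hv : Continuous v) (n : ℕ) :
    Continuous ((ODE.picard f t₀ c)^[n] v) := by
  induction n with
  | zero => exact hv
  | succ n ih =>
    rw [iterate_succ_apply']
    exact hf.continuous_picard ih

lemma norm_iterate_picard_sub_le (hf : IsCaratheodoryLipschitz f K)
    (hu : IsCaratheodorySolution f t₀ c u) (hv : Continuous v) {D : ℝ}
    (hD : ∀ s ∈ Icc t₀ T, ‖v s - u s‖ ≤ D) (n : ℕ) (ht : t ∈ Icc t₀ T) :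
    ‖(ODE.picard f t₀ c)^[n] v t - u t‖ ≤
      D / 2 ^ n * Real.exp (∫ r in t₀..t, 2 * (K r : ℝ)) := by
  induction n generalizing t with
  | zero =>
    have h_weight : 0 ≤ ∫ r in t₀..t, 2 * (K r : ℝ) :=
      intervalIntegral.integral_nonneg ht.1 fun r _ => by positivity
    have hD_nonneg : 0 ≤ D := (norm_nonneg _).trans (hD t ht)
    rw [pow_zero, div_one]
    exact (hD t ht).trans (le_mul_of_one_le_right hD_nonneg (Real.one_le_exp h_weight))
  | succ n ih =>
    rw [iterate_succ_apply', ← congrFun hu.isFixedPt_picard t, pow_succ, ← div_div]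
    exact hf.norm_picard_sub_picard_le hu.continuous (hf.continuous_iterate_picard hv n) ht.1
      fun s hs => ih ⟨hs.1, hs.2.trans ht.2⟩

theorem tendsto_iterate_picard (hf : IsCaratheodoryLipschitz f K)
    (hu : IsCaratheodorySolution f t₀ c u) (hv : Continuous v) (ht : t₀ ≤ t) :
    Tendsto (fun n => (ODE.picard f t₀ c)^[n] v t) atTop (𝓝 (u t)) := by
  obtain ⟨D, hD⟩ := (isCompact_Icc (a := t₀) (b := t)).exists_bound_of_continuousOn
    (hv.sub hu.continuous).continuousOn
  have h_lim : Tendsto (fun n : ℕ => D / 2 ^ n * Real.exp (∫ r in t₀..t, 2 * (K r : ℝ)))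
      atTop (𝓝 0) := by
    simpa using (tendsto_const_nhds.div_atTop
      (tendsto_pow_atTop_atTop_of_one_lt (one_lt_two : (1 : ℝ) < 2))).mul_const _
  rw [tendsto_iff_norm_sub_tendsto_zero]
  exact squeeze_zero (fun n => norm_nonneg _)
    (fun n => hf.norm_iterate_picard_sub_le hu hv hD n ⟨ht, le_rfl⟩) h_lim

theorem solution_unique (hf : IsCaratheodoryLipschitz f K)
    (hu : IsCaratheodorySolution f t₀ c u) (hv : IsCaratheodorySolution f t₀ c v) (ht : t₀ ≤ t) :
    u t = v t := by
  have h_lim := hf.tendsto_iterate_picard hu hv.continuous ht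
  simp only [(hv.isFixedPt_picard.iterate _).eq] at h_lim
  exact tendsto_nhds_unique h_lim tendsto_const_nhds

end IsCaratheodoryLipschitz

section Measurability

variable {Ω : Type*} [MeasurableSpace Ω]

lemma stronglyMeasurable_intervalIntegral_of_uncurry {F : Ω → ℝ → E}
    (hF : StronglyMeasurable (uncurry F)) (μ : Measure ℝ) [SFinite μ] (a : ℝ) :
    StronglyMeasurable fun p : Ω × ℝ => ∫ s in a..p.2, F p.1 s ∂μ := by
  have hF' : StronglyMeasurable fun q : (Ω × ℝ) × ℝ => F q.1.1 q.2 :=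
    hF.comp_measurable (measurable_fst.fst.prodMk measurable_snd)
  have h_Ioc : ∀ {α β : Ω × ℝ → ℝ}, Measurable α → Measurable β →
      StronglyMeasurable fun p => ∫ s in Ioc (α p) (β p), F p.1 s ∂μ := fun {α β} hα hβ => by
    have hS : MeasurableSet {q : (Ω × ℝ) × ℝ | q.2 ∈ Ioc (α q.1) (β q.1)} :=
      (measurableSet_lt (hα.comp measurable_fst) measurable_snd).inter
        (measurableSet_le measurable_snd (hβ.comp measurable_fst))
    simp only [← integral_indicator measurableSet_Ioc]
    exact (hF'.indicator hS).integral_prod_right'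
  exact (h_Ioc measurable_const measurable_snd).sub (h_Ioc measurable_snd measurable_const)

variable [MeasurableSpace E] [BorelSpace E] [SecondCountableTopology E] {F : Ω → ℝ → E → E}

lemma measurable_iterate_picard (hF : Measurable fun p : Ω × ℝ × E => F p.1 p.2.1 p.2.2)
    (t₀ : ℝ) (c : E) (n : ℕ) :
    Measurable fun p : Ω × ℝ => (ODE.picard (F p.1) t₀ c)^[n] (fun _ => c) p.2 := by
  induction n with
  | zero => exact measurable_const
  | succ n ih =>
    simp only [iterate_succ_apply', ODE.picard_apply]
    refine measurable_const.add (stronglyMeasurable_intervalIntegral_of_uncurry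
      (F := fun ω s => F ω s ((ODE.picard (F ω) t₀ c)^[n] (fun _ => c) s)) ?_ volume t₀).measurable
    exact (hF.comp (measurable_fst.prodMk (measurable_snd.prodMk ih))).stronglyMeasurable

theorem measurable_caratheodorySolution {K : Ω → ℝ → ℝ≥0} {u : Ω → ℝ → E}
    (hF : Measurable fun p : Ω × ℝ × E => F p.1 p.2.1 p.2.2)
    (hF_lip : ∀ ω, IsCaratheodoryLipschitz (F ω) (K ω))
    (hu : ∀ ω, IsCaratheodorySolution (F ω) t₀ c (u ω)) (ht : t₀ ≤ t) :
    Measurable fun ω => u ω t :=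
  measurable_of_tendsto_metrizable
    (fun n => (measurable_iterate_picard hF t₀ c n).comp (measurable_id.prodMk measurable_const))
    (tendsto_pi_nhds.2 fun ω =>
      (hF_lip ω).tendsto_iterate_picard (hu ω) continuous_const ht)

end Measurability

end Caratheodory


lemma intervalIntegrable_finsetSum {κ F : Type*} [NormedAddCommGroup F] {μ : Measure ℝ} {a b : ℝ}
    {s : Finset κ} {f : κ → ℝ → F} (hf : ∀ k ∈ s, IntervalIntegrable (f k) μ a b) :
    IntervalIntegrable (fun t => ∑ k ∈ s, f k t) μ a b := by
  simpa only [Finset.sum_fn] using IntervalIntegrable.sum s hf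

lemma integrable_iSup_of_finite {α κ : Type*} [MeasurableSpace α] {μ : Measure α} [Finite κ]
    {f : κ → α → ℝ} (hf : ∀ k, Integrable (f k) μ) : Integrable (fun x => ⨆ k, f k x) μ := by
  have := Fintype.ofFinite κ
  refine (integrable_finsetSum Finset.univ fun k _ => (hf k).norm).mono'
    (AEMeasurable.iSup fun k => (hf k).aemeasurable).aestronglyMeasurable
    (Eventually.of_forall fun x => ?_)
  cases isEmpty_or_nonempty κ with
  | inl _ => simp
  | inr _ =>
    obtain ⟨k, hk⟩ := exists_eq_ciSup_of_finite (f := fun k => f k x)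
    rw [← hk]
    exact Finset.single_le_sum (f := fun k => ‖f k x‖) (fun _ _ => norm_nonneg _)
      (Finset.mem_univ k)

lemma intervalIntegrable_iSup_of_finite {κ : Type*} [Finite κ] {f : κ → ℝ → ℝ} {μ : Measure ℝ}
    {a b : ℝ} (hf : ∀ k, IntervalIntegrable (f k) μ a b) :
    IntervalIntegrable (fun t => ⨆ k, f k t) μ a b :=
  ⟨integrable_iSup_of_finite fun k => (hf k).1, integrable_iSup_of_finite fun k => (hf k).2⟩

section MulVec

variable {m n : Type*} [Fintype m] [Fintype n]

lemma norm_mulVec_le_sum_mul_norm (M : Matrix m n ℝ) (v : n → ℝ) :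
    ‖M *ᵥ v‖ ≤ (∑ i, ∑ j, ‖M i j‖) * ‖v‖ := by
  refine (pi_norm_le_iff_of_nonneg (by positivity)).2 fun i => ?_
  calc ‖∑ j, M i j * v j‖ ≤ ∑ j, ‖M i j * v j‖ := norm_sum_le _ _
    _ ≤ ∑ j, ‖M i j‖ * ‖v‖ := by
        gcongr with j
        rw [norm_mul]
        gcongr
        exact norm_le_pi_norm v j
    _ = (∑ j, ‖M i j‖) * ‖v‖ := (Finset.sum_mul ..).symm
    _ ≤ (∑ i, ∑ j, ‖M i j‖) * ‖v‖ := by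
        gcongr
        exact Finset.single_le_sum (f := fun i => ∑ j, ‖M i j‖)
          (fun _ _ => by positivity) (Finset.mem_univ i)

lemma intervalIntegrable_mulVec {B : ℝ → Matrix m n ℝ} {v : ℝ → n → ℝ} {μ : Measure ℝ} {a b : ℝ}
    (hB : ∀ i j, IntervalIntegrable (fun t => B t i j) μ a b) (hv : ContinuousOn v (uIcc a b)) :
    IntervalIntegrable (fun t => B t *ᵥ v t) μ a b := by
  have h_coord (i : m) : IntervalIntegrable (fun t => ∑ j, B t i j * v t j) μ a b :=
    intervalIntegrable_finsetSum fun j _ =>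
      (hB i j).mul_continuousOn (continuousOn_pi.1 hv j)
  exact ⟨Integrable.of_eval fun i => (h_coord i).1, Integrable.of_eval fun i => (h_coord i).2⟩

end MulVec

section LinearSystem

variable {ι : Type*} [Fintype ι] {B : ℝ → Matrix ι ι ℝ} {t₀ t : ℝ} {c : ι → ℝ} {u : ℝ → ι → ℝ}

lemma isCaratheodoryLipschitz_mulVec
    (hB : ∀ i j a b, IntervalIntegrable (fun t => B t i j) volume a b) :
    IsCaratheodoryLipschitz (fun t x => B t *ᵥ x) fun t => ∑ i, ∑ j, ‖B t i j‖₊ where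
  intervalIntegrable_comp u hu a b :=
    intervalIntegrable_mulVec (fun i j => hB i j a b) hu.continuousOn
  intervalIntegrable_lipschitzConst a b := by
    push_cast
    exact intervalIntegrable_finsetSum fun i _ =>
      intervalIntegrable_finsetSum fun j _ => (hB i j a b).norm
  lipschitzWith t := LipschitzWith.of_dist_le_mul fun x y => by
    simpa only [dist_eq_norm, Matrix.mulVec_sub, NNReal.coe_sum, coe_nnnorm]
      using norm_mulVec_le_sum_mul_norm (B t) (x - y)

lemma sign_mul_mulVec_le {M : Matrix ι ι ℝ} {i : ι} (hM : ∀ j, i ≠ j → 0 ≤ M i j) (v : ι → ℝ) :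
    SignType.sign (v i) * (M *ᵥ v) i ≤ (⨆ j, M i j) * ∑ j, |v j| := by
  have h_term (j : ι) : SignType.sign (v i) * (M i j * v j) ≤ M i j * |v j| := by
    rw [mul_left_comm]
    rcases eq_or_ne i j with rfl | hij
    · rw [sign_mul_self]
    · refine mul_le_mul_of_nonneg_left ?_ (hM j hij)
      cases SignType.sign (v i) <;> simp [le_abs_self, neg_le_abs]
  calc SignType.sign (v i) * (M *ᵥ v) i = ∑ j, SignType.sign (v i) * (M i j * v j) :=
        Finset.mul_sum ..
    _ ≤ ∑ j, (⨆ j, M i j) * |v j| := Finset.sum_le_sum fun j _ => by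
        refine (h_term j).trans ?_
        gcongr
        exact le_ciSup (f := fun j => M i j) (finite_range _).bddAbove j
    _ = (⨆ j, M i j) * ∑ j, |v j| := (Finset.mul_sum ..).symm

lemma deriv_sum_abs_le_of_hasDerivAt_mulVec {M : Matrix ι ι ℝ} (hM : ∀ i j, i ≠ j → 0 ≤ M i j)
    (hu : ∀ i, HasDerivAt (fun s => u s i) ((M *ᵥ u t) i) t)
    (hu_abs : ∀ i, DifferentiableAt ℝ (fun s => |u s i|) t) :
    deriv (fun s => ∑ i, |u s i|) t ≤ (∑ i, ⨆ j, M i j) * ∑ i, |u t i| := by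
  rw [deriv_fun_sum fun i _ => hu_abs i, Finset.sum_mul]
  gcongr with i
  rw [deriv_abs_eq_sign_mul (hu i)]
  exact sign_mul_mulVec_le (hM i) (u t)

lemma IsCaratheodorySolution.apply_eq_add_integral {f : ℝ → (ι → ℝ) → ι → ℝ}
    (hu : IsCaratheodorySolution f t₀ c u)
    (hf : IntervalIntegrable (fun s => f s (u s)) volume t₀ t) (i : ι) :
    u t i = c i + ∫ s in t₀..t, f s (u s) i := by
  have h_eval : (∫ s in t₀..t, f s (u s)) i = ∫ s in t₀..t, f s (u s) i :=
    ((ContinuousLinearMap.proj (R := ℝ) i).intervalIntegral_comp_comm hf).symm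
  rw [← h_eval]
  exact congrFun (hu.eq_add_integral t) i

/- Integrals of locally integrable functions are absolutely continuous and differentiable almost
everywhere, so the Grönwall inequality applies although `u` need not be differentiable. -/
theorem IsCaratheodorySolution.sum_abs_le_exp_integral_mul
    (hB : ∀ i j a b, IntervalIntegrable (fun t => B t i j) volume a b)
    (hB_nonneg : ∀ t i j, i ≠ j → 0 ≤ B t i j)
    (hu : IsCaratheodorySolution (fun t x => B t *ᵥ x) t₀ c u) (ht : t₀ ≤ t) :
    ∑ i, |u t i| ≤ Real.exp (∫ s in t₀..t, ∑ i, ⨆ j, B s i j) * ∑ i, |c i| := by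
  have h_int (r : ℝ) : IntervalIntegrable (fun s => B s *ᵥ u s) volume t₀ r :=
    (isCaratheodoryLipschitz_mulVec hB).intervalIntegrable_comp u hu.continuous t₀ r
  have h_int_coord (i : ι) : IntervalIntegrable (fun s => (B s *ᵥ u s) i) volume t₀ t :=
    ⟨(h_int t).1.eval i, (h_int t).2.eval i⟩
  have h_coord (i : ι) : (fun r => u r i) = fun r => c i + ∫ s in t₀..r, (B s *ᵥ u s) i :=
    funext fun r => hu.apply_eq_add_integral (h_int r) i
  have h_ac (i : ι) : AbsolutelyContinuousOnInterval (fun r => |u r i|) t₀ t := by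
    refine absolutelyContinuousOnInterval_comp_of_locallyLipschitz
      (lipschitzWith_one_norm (E := ℝ)).locallyLipschitz ?_
    rw [h_coord i]
    exact (absolutelyContinuousOnInterval_const (c i) t₀ t).fun_add
      ((h_int_coord i).absolutelyContinuousOnInterval_intervalIntegral left_mem_uIcc)
  have h_rate : IntervalIntegrable (fun s => ∑ i, ⨆ j, B s i j) volume t₀ t :=
    intervalIntegrable_finsetSum fun i _ =>
      intervalIntegrable_iSup_of_finite fun j => hB i j t₀ t
  have h_gronwall := le_exp_integral_mul_of_deriv_le ht
    (absolutelyContinuousOnInterval_finsetSum fun i (_ : i ∈ Finset.univ) => h_ac i) h_rate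
  rw [hu.apply_initial] at h_gronwall
  refine h_gronwall ?_
  filter_upwards [ae_all_iff.2 fun i => (h_int_coord i).ae_hasDerivAt_integral,
    ae_all_iff.2 fun i => (h_ac i).ae_differentiableAt] with r h_deriv h_diff hr
  refine deriv_sum_abs_le_of_hasDerivAt_mulVec (hB_nonneg r) (fun i => ?_) fun i => h_diff i hr
  rw [h_coord i]
  exact (h_deriv i hr t₀ left_mem_uIcc).const_add (c i)

end LinearSystem

section FundamentalMatrix

variable {ι : Type*} [Fintype ι] {B : ℝ → Matrix ι ι ℝ} {Φ Ψ : ℝ → Matrix ι ι ℝ} {s t : ℝ}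

/-- `Φ` is the fundamental matrix, normalized by `Φ(0) = 1`, of the linear system `u' = B(t) u` with
locally integrable coefficients. The normalization is encoded in the requirement that `t ↦ Φ(t) c`
solves the system with initial value `c` at time `0`. -/
structure IsFundamentalMatrix (B Φ : ℝ → Matrix ι ι ℝ) : Prop where
  intervalIntegrable_apply : ∀ i j a b, IntervalIntegrable (fun t => B t i j) volume a b
  isCaratheodorySolution_mulVec : ∀ c : ι → ℝ,
    IsCaratheodorySolution (fun t x => B t *ᵥ x) 0 c fun t => Φ t *ᵥ c

namespace IsFundamentalMatrix

lemma comp_flow {Ω : Type*} {θ : ℝ → Ω → Ω} {A : Ω → Matrix ι ι ℝ} {U : Ω → ℝ → Matrix ι ι ℝ}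
    (hθ_add : ∀ s t, θ (s + t) = θ s ∘ θ t)
    (hU : ∀ ω, IsFundamentalMatrix (fun t => A (θ t ω)) (U ω)) (ω : Ω) (s : ℝ) :
    IsFundamentalMatrix (fun t => A (θ (t + s) ω)) (U (θ s ω)) := by
  simpa only [hθ_add, Function.comp_apply] using hU (θ s ω)

lemma map_zero [DecidableEq ι] (hΦ : IsFundamentalMatrix B Φ) : Φ 0 = 1 :=
  Matrix.ext_iff_mulVec.2 fun c => by
    rw [(hΦ.isCaratheodorySolution_mulVec c).apply_initial, Matrix.one_mulVec]

lemma continuous (hΦ : IsFundamentalMatrix B Φ) : Continuous Φ := by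
  classical
  refine continuous_matrix fun i j => ?_
  simpa [Function.comp_def] using (continuous_apply i).comp
    (hΦ.isCaratheodorySolution_mulVec (Pi.single j 1)).continuous

lemma mul_eq_apply_add (hΦ : IsFundamentalMatrix B Φ)
    (hΨ : IsFundamentalMatrix (fun r => B (r + s)) Ψ) (ht : 0 ≤ t) : Ψ t * Φ s = Φ (t + s) := by
  classical
  refine Matrix.ext_iff_mulVec.2 fun c => ?_
  rw [← Matrix.mulVec_mulVec]
  exact (isCaratheodoryLipschitz_mulVec hΨ.intervalIntegrable_apply).solution_unique
    (hΨ.isCaratheodorySolution_mulVec (Φ s *ᵥ c))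
    ((hΦ.isCaratheodorySolution_mulVec c).comp_add_right
      (isCaratheodoryLipschitz_mulVec hΦ.intervalIntegrable_apply) s) ht

lemma mul_apply_neg_eq_one [DecidableEq ι] (hΦ : IsFundamentalMatrix B Φ)
    (hΨ : IsFundamentalMatrix (fun r => B (r + s)) Ψ) (hs : 0 ≤ s) : Φ s * Ψ (-s) = 1 := by
  have hΦ' : IsFundamentalMatrix (fun r => B (r + -s + s)) Φ := by
    simpa only [neg_add_cancel_right] using hΦ
  rw [hΨ.mul_eq_apply_add hΦ' hs, add_neg_cancel, hΨ.map_zero]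

theorem continuousOn_apply_sub {Ψ : ℝ → ℝ → Matrix ι ι ℝ} (hΦ : IsFundamentalMatrix B Φ)
    (hΨ : ∀ s, IsFundamentalMatrix (fun r => B (r + s)) (Ψ s)) (T : ℝ) :
    ContinuousOn (fun s => Ψ s (T - s)) (Icc 0 T) := by
  classical
  have h_unit {s : ℝ} (hs : 0 ≤ s) : IsUnit (Φ s).det :=
    Matrix.isUnit_det_of_right_inverse (hΦ.mul_apply_neg_eq_one (hΨ s) hs)
  have h_eq : EqOn (fun s => Ψ s (T - s)) (fun s => Φ T * (Φ s)⁻¹) (Icc 0 T) := fun s hs => by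
    have h_cocycle := hΦ.mul_eq_apply_add (hΨ s) (sub_nonneg.2 hs.2)
    rw [sub_add_cancel] at h_cocycle
    simp only [← h_cocycle, Matrix.mul_nonsing_inv_cancel_right _ _ (h_unit hs.1)]
  refine ContinuousOn.congr ?_ h_eq
  simp only [Matrix.inv_def, Ring.inverse_eq_inv']
  exact continuousOn_const.mul
    ((hΦ.continuous.matrix_det.continuousOn.inv₀ fun s hs => (h_unit hs.1).ne_zero).smul
      hΦ.continuous.matrix_adjugate.continuousOn)

theorem measurable_apply {Ω : Type*} [MeasurableSpace Ω] {B Φ : Ω → ℝ → Matrix ι ι ℝ}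
    (hB : ∀ i j, Measurable fun p : Ω × ℝ => B p.1 p.2 i j)
    (hΦ : ∀ ω, IsFundamentalMatrix (B ω) (Φ ω)) (ht : 0 ≤ t) (i j : ι) :
    Measurable fun ω => Φ ω t i j := by
  classical
  have h_rhs : Measurable fun p : Ω × ℝ × (ι → ℝ) => B p.1 p.2.1 *ᵥ p.2.2 := by
    refine measurable_pi_lambda _ fun i => Finset.measurable_sum _ fun j _ => ?_
    exact ((hB i j).comp (measurable_fst.prodMk measurable_snd.fst)).mul
      ((measurable_pi_apply j).comp measurable_snd.snd)
  have h_col := measurable_caratheodorySolution h_rhs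
    (fun ω => isCaratheodoryLipschitz_mulVec (hΦ ω).intervalIntegrable_apply)
    (fun ω => (hΦ ω).isCaratheodorySolution_mulVec (Pi.single j 1)) ht
  simpa [Function.comp_def] using (measurable_pi_apply i).comp h_col

end IsFundamentalMatrix

end FundamentalMatrix

section OperatorNorm

variable {N : ℕ}

lemma enorm'_eq_norm_toLp (u : Fin N → ℝ) : enorm' u = ‖WithLp.toLp 2 u‖ := by
  simp [enorm', EuclideanSpace.norm_eq]

lemma abs_apply_le_enorm' (u : Fin N → ℝ) (i : Fin N) : |u i| ≤ enorm' u := by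
  rw [enorm'_eq_norm_toLp]
  exact PiLp.norm_apply_le (WithLp.toLp 2 u) i

lemma enorm'_le_l1norm (u : Fin N → ℝ) : enorm' u ≤ l1norm u := by
  refine Real.sqrt_le_iff.2 ⟨Finset.sum_nonneg fun _ _ => abs_nonneg _, ?_⟩
  simpa only [sq_abs, l1norm] using
    Finset.sum_sq_le_sq_sum_of_nonneg (s := Finset.univ) fun i _ => abs_nonneg (u i)

lemma l1norm_le_mul_enorm' (u : Fin N → ℝ) : l1norm u ≤ N * enorm' u := by
  simpa [l1norm] using Finset.sum_le_card_nsmul Finset.univ _ _ fun i _ => abs_apply_le_enorm' u i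

lemma eopNorm_eq_norm_toEuclideanCLM (M : Matrix (Fin N) (Fin N) ℝ) :
    eopNorm M = ‖Matrix.toEuclideanCLM (n := Fin N) (𝕜 := ℝ) M‖ := by
  rw [← ContinuousLinearMap.sSup_unitClosedBall_eq_norm, eopNorm]
  congr 1
  ext c
  constructor
  · rintro ⟨u, hu, rfl⟩
    refine ⟨WithLp.toLp 2 u, mem_closedBall_zero_iff.2 (enorm'_eq_norm_toLp u ▸ hu), ?_⟩
    simp only [Matrix.toEuclideanCLM_toLp, enorm'_eq_norm_toLp]
  · rintro ⟨x, hx, rfl⟩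
    refine ⟨x.ofLp, (enorm'_eq_norm_toLp x.ofLp).trans_le (mem_closedBall_zero_iff.1 hx), ?_⟩
    rw [enorm'_eq_norm_toLp, ← Matrix.toEuclideanCLM_toLp]

lemma continuous_eopNorm : Continuous (eopNorm : Matrix (Fin N) (Fin N) ℝ → ℝ) := by
  have h_lin : Continuous
      (Matrix.toEuclideanCLM (n := Fin N) (𝕜 := ℝ)).toAlgEquiv.toLinearMap :=
    LinearMap.continuous_of_finiteDimensional _
  rw [funext eopNorm_eq_norm_toEuclideanCLM]
  exact h_lin.norm

lemma abs_apply_le_eopNorm (M : Matrix (Fin N) (Fin N) ℝ) (i j : Fin N) : |M i j| ≤ eopNorm M :=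
  calc |M i j| = |(M *ᵥ Pi.single j 1) i| := by simp
    _ ≤ enorm' (M *ᵥ Pi.single j 1) := abs_apply_le_enorm' _ i
    _ = ‖Matrix.toEuclideanCLM (n := Fin N) (𝕜 := ℝ) M (EuclideanSpace.single j 1)‖ := by
        rw [enorm'_eq_norm_toLp, ← Matrix.toEuclideanCLM_toLp]; rfl
    _ ≤ eopNorm M := by
        rw [eopNorm_eq_norm_toEuclideanCLM]
        simpa using (Matrix.toEuclideanCLM (n := Fin N) (𝕜 := ℝ) M).le_opNorm
          (EuclideanSpace.single j 1)

lemma eopNorm_le_mul_of_l1norm_mulVec_le {M : Matrix (Fin N) (Fin N) ℝ} {C : ℝ} (hC : 0 ≤ C)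
    (hM : ∀ u, l1norm (M *ᵥ u) ≤ C * l1norm u) : eopNorm M ≤ N * C := by
  refine csSup_le ⟨_, 0, by simp [enorm'], rfl⟩ ?_
  rintro _ ⟨u, hu, rfl⟩
  calc enorm' (M *ᵥ u) ≤ l1norm (M *ᵥ u) := enorm'_le_l1norm _
    _ ≤ C * l1norm u := hM u
    _ ≤ C * (N * enorm' u) := by gcongr; exact l1norm_le_mul_enorm' u
    _ ≤ C * (N * 1) := by gcongr
    _ = N * C := by ring

lemma lnplus_eq_posLog : lnplus = Real.posLog :=
  funext fun x => max_comm (Real.log x) 0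

lemma continuous_lnplus_eopNorm :
    Continuous fun M : Matrix (Fin N) (Fin N) ℝ => lnplus (eopNorm M) := by
  rw [lnplus_eq_posLog]
  exact Real.continuous_posLog.comp continuous_eopNorm

variable {B Φ : ℝ → Matrix (Fin N) (Fin N) ℝ} {t : ℝ}

lemma IsFundamentalMatrix.of_eopNorm
    (hB_meas : ∀ i j, Measurable fun t => B t i j)
    (hB : ∀ a b, IntervalIntegrable (fun t => eopNorm (B t)) volume a b)
    (hΦ_cont : ∀ c, Continuous fun t => Φ t *ᵥ c)
    (hΦ : ∀ c t, Φ t *ᵥ c = c + ∫ s in (0 : ℝ)..t, B s *ᵥ (Φ s *ᵥ c)) :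
    IsFundamentalMatrix B Φ where
  intervalIntegrable_apply i j a b :=
    (hB a b).mono_fun (hB_meas i j).aestronglyMeasurable
      (Eventually.of_forall fun t => (abs_apply_le_eopNorm (B t) i j).trans (le_abs_self _))
  isCaratheodorySolution_mulVec c := ⟨hΦ_cont c, funext fun t => (hΦ c t).symm⟩

theorem IsFundamentalMatrix.l1norm_mulVec_le (hΦ : IsFundamentalMatrix B Φ)
    (hB_nonneg : ∀ t i j, i ≠ j → 0 ≤ B t i j) (ht : 0 ≤ t) (c : Fin N → ℝ) :
    l1norm (Φ t *ᵥ c) ≤ Real.exp (∫ s in (0 : ℝ)..t, ∑ i, ⨆ j, B s i j) * l1norm c :=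
  (hΦ.isCaratheodorySolution_mulVec c).sum_abs_le_exp_integral_mul
    hΦ.intervalIntegrable_apply hB_nonneg ht

theorem IsFundamentalMatrix.lnplus_eopNorm_le (hΦ : IsFundamentalMatrix B Φ)
    (hB_nonneg : ∀ t i j, i ≠ j → 0 ≤ B t i j) (ht : 0 ≤ t) {g : ℝ → ℝ}
    (hg : IntervalIntegrable g volume 0 t) (hg_nonneg : ∀ s, 0 ≤ g s)
    (hBg : ∀ s i j, B s i j ≤ g s) :
    lnplus (eopNorm (Φ t)) ≤ Real.log N + N * ∫ s in (0 : ℝ)..t, g s := by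
  have h_rate : ∫ s in (0 : ℝ)..t, ∑ i, ⨆ j, B s i j ≤ N * ∫ s in (0 : ℝ)..t, g s := by
    rw [← intervalIntegral.integral_const_mul]
    refine intervalIntegral.integral_mono_on ht (intervalIntegrable_finsetSum fun i _ =>
      intervalIntegrable_iSup_of_finite fun j => hΦ.intervalIntegrable_apply i j 0 t)
      (hg.const_mul _) fun s _ => ?_
    simpa using Finset.sum_le_card_nsmul Finset.univ _ _ fun i _ =>
      Real.iSup_le (hBg s i) (hg_nonneg s)
  have h_norm : eopNorm (Φ t) ≤ N * Real.exp (N * ∫ s in (0 : ℝ)..t, g s) :=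
    (eopNorm_le_mul_of_l1norm_mulVec_le (Real.exp_pos _).le
      (hΦ.l1norm_mulVec_le hB_nonneg ht)).trans (by gcongr)
  have h_nonneg : 0 ≤ N * ∫ s in (0 : ℝ)..t, g s :=
    mul_nonneg N.cast_nonneg (intervalIntegral.integral_nonneg ht fun s _ => hg_nonneg s)
  rw [lnplus_eq_posLog]
  calc Real.posLog (eopNorm (Φ t))
      ≤ Real.posLog (N * Real.exp (N * ∫ s in (0 : ℝ)..t, g s)) :=
        Real.posLog_le_posLog (by rw [eopNorm_eq_norm_toEuclideanCLM]; positivity) h_norm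
    _ ≤ Real.log N + Real.posLog (Real.exp (N * ∫ s in (0 : ℝ)..t, g s)) := Real.posLog_nat_mul
    _ = Real.log N + N * ∫ s in (0 : ℝ)..t, g s := by
        rw [Real.posLog, Real.log_exp, max_eq_right h_nonneg]

end OperatorNorm

section DominatedSupremum

variable {Ω X : Type*} [MeasurableSpace Ω] {μ : Measure Ω} [TopologicalSpace X]
  [TopologicalSpace.SeparableSpace X]

lemma measurable_iSup_of_continuous {f : X → Ω → ℝ} (hf : ∀ x, Measurable (f x))
    (hf_cont : ∀ ω, Continuous fun x => f x ω) : Measurable fun ω => ⨆ x, f x ω := by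
  obtain ⟨S, hS_count, hS_dense⟩ := TopologicalSpace.exists_countable_dense X
  have := hS_count.to_subtype
  simp only [← hS_dense.ciSup' (hf_cont _)]
  exact Measurable.iSup fun x : S => hf x

lemma integrable_iSup_of_dominated [Nonempty X] {f : X → Ω → ℝ} {G : Ω → ℝ}
    (hf : ∀ x, Measurable (f x)) (hf_cont : ∀ ω, Continuous fun x => f x ω)
    (hG : Integrable G μ) (hfG : ∀ x ω, |f x ω| ≤ G ω) :
    Integrable (fun ω => ⨆ x, f x ω) μ := by
  refine hG.mono' (measurable_iSup_of_continuous hf hf_cont).aestronglyMeasurable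
    (Eventually.of_forall fun ω => abs_le.2 ⟨?_, ciSup_le fun x => (abs_le.1 (hfG x ω)).2⟩)
  obtain ⟨x⟩ := ‹Nonempty X›
  have h_bdd : BddAbove (range fun x => f x ω) :=
    ⟨G ω, forall_mem_range.2 fun x => (abs_le.1 (hfG x ω)).2⟩
  exact (abs_le.1 (hfG x ω)).1.trans (le_ciSup h_bdd x)

lemma integrable_iSup_lnplus_eopNorm [Nonempty X] {N : ℕ} {M : X → Ω → Matrix (Fin N) (Fin N) ℝ}
    {G : Ω → ℝ} (hM : ∀ x i j, Measurable fun ω => M x ω i j)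
    (hM_cont : ∀ ω, Continuous fun x => M x ω) (hG : Integrable G μ)
    (hMG : ∀ x ω, lnplus (eopNorm (M x ω)) ≤ G ω) :
    Integrable (fun ω => ⨆ x, lnplus (eopNorm (M x ω))) μ := by
  have h_cont : Continuous fun a : Fin N → Fin N → ℝ => lnplus (eopNorm (Matrix.of a)) :=
    continuous_lnplus_eopNorm
  refine integrable_iSup_of_dominated (fun x => ?_)
    (fun ω => continuous_lnplus_eopNorm.comp (hM_cont ω)) hG fun x ω => ?_
  · exact h_cont.measurable.comp
      (measurable_pi_lambda _ fun i => measurable_pi_lambda _ fun j => hM x i j)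
  · exact (abs_of_nonneg (le_max_right _ _)).trans_le (hMG x ω)

end DominatedSupremum

lemma integrable_intervalIntegral_comp_of_measurePreserving {α β E : Type*} [MeasurableSpace α]
    [MeasurableSpace β] [NormedAddCommGroup E] [NormedSpace ℝ E] {μ : Measure α} {ν : Measure β}
    {ρ : Measure ℝ} [SFinite μ] [SFinite ν] [IsLocallyFiniteMeasure ρ] {φ : ℝ → α → β}
    (hφ_meas : Measurable (uncurry φ)) (hφ : ∀ t, MeasurePreserving (φ t) μ ν) {g : β → E}
    (hg : Integrable g ν) (a b : ℝ) :
    Integrable (fun x => ∫ t in a..b, g (φ t x) ∂ρ) μ := by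
  have h_Ioc (a b : ℝ) : Integrable (fun x => ∫ t in Ioc a b, g (φ t x) ∂ρ) μ := by
    have : IsFiniteMeasure (ρ.restrict (Ioc a b)) := ⟨by simpa using measure_Ioc_lt_top⟩
    have h_skew := (MeasurePreserving.id (ρ.restrict (Ioc a b))).skew_product hφ_meas
      (ae_of_all _ fun t => (hφ t).map_eq)
    exact (h_skew.integrable_comp_of_integrable
      (hg.comp_snd (ρ.restrict (Ioc a b)))).integral_prod_right
  exact (h_Ioc a b).sub (h_Ioc b a)

section RandomLinearSystem

variable {N : ℕ} {Ω : Type*} {θ : ℝ → Ω → Ω} {A : Ω → Matrix (Fin N) (Fin N) ℝ}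
  {U : Ω → ℝ → Matrix (Fin N) (Fin N) ℝ}

theorem lnplus_eopNorm_flow_le (hθ_add : ∀ s t, θ (s + t) = θ s ∘ θ t)
    (hU : ∀ ω, IsFundamentalMatrix (fun t => A (θ t ω)) (U ω))
    (hA_nonneg : ∀ ω i j, i ≠ j → 0 ≤ A ω i j) {s t T : ℝ} (hs : 0 ≤ s) (ht : 0 ≤ t)
    (hst : s + t ≤ T) (ω : Ω) :
    lnplus (eopNorm (U (θ s ω) t)) ≤
      Real.log N + N * ∫ τ in (0 : ℝ)..T, |⨆ i, ⨆ j, A (θ τ ω) i j| := by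
  set g : ℝ → ℝ := fun τ => |⨆ i, ⨆ j, A (θ τ ω) i j|
  have hg (a b : ℝ) : IntervalIntegrable g volume a b :=
    (intervalIntegrable_iSup_of_finite fun i => intervalIntegrable_iSup_of_finite fun j =>
      (hU ω).intervalIntegrable_apply i j a b).abs
  have h_entry (τ : ℝ) (i j : Fin N) : A (θ τ ω) i j ≤ g τ :=
    calc A (θ τ ω) i j ≤ ⨆ j, A (θ τ ω) i j :=
          le_ciSup (f := fun j => A (θ τ ω) i j) (finite_range _).bddAbove j
      _ ≤ ⨆ i, ⨆ j, A (θ τ ω) i j :=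
          le_ciSup (f := fun i => ⨆ j, A (θ τ ω) i j) (finite_range _).bddAbove i
      _ ≤ g τ := le_abs_self _
  calc lnplus (eopNorm (U (θ s ω) t))
      ≤ Real.log N + N * ∫ τ in (0 : ℝ)..t, g (τ + s) :=
        (IsFundamentalMatrix.comp_flow hθ_add hU ω s).lnplus_eopNorm_le (fun _ => hA_nonneg _) ht
          (by simpa using (hg s (t + s)).comp_add_right s) (fun _ => abs_nonneg _)
          fun τ => h_entry (τ + s)
    _ = Real.log N + N * ∫ τ in s..t + s, g τ := by
        rw [intervalIntegral.integral_comp_add_right, zero_add]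
    _ ≤ Real.log N + N * ∫ τ in (0 : ℝ)..T, g τ := by
        gcongr
        exact intervalIntegral.integral_mono_interval hs (by linarith) (by linarith)
          (Eventually.of_forall fun _ => abs_nonneg _) (hg 0 T)

end RandomLinearSystem

theorem stmt_13_general {N : ℕ} {Ω : Type*} [MeasurableSpace Ω] (ℙ : Measure Ω)
    [IsFiniteMeasure ℙ] (θ : ℝ → Ω → Ω) (hθ0 : θ 0 = id)
    (hθadd : ∀ s t : ℝ, θ (s + t) = θ s ∘ θ t)
    (hθjm : Measurable fun p : ℝ × Ω => θ p.1 p.2)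
    (hθmp : ∀ t, MeasurePreserving (θ t) ℙ ℙ)
    (A : Ω → Matrix (Fin N) (Fin N) ℝ) (hAmeas : ∀ i j, Measurable fun ω => A ω i j)
    (hAloc : ∀ ω, ∀ a c : ℝ, IntervalIntegrable (fun t => eopNorm (A (θ t ω))) volume a c)
    (U : Ω → ℝ → Matrix (Fin N) (Fin N) ℝ)
    (hUcont : ∀ ω (u0 : Fin N → ℝ), Continuous fun t : ℝ => (U ω t).mulVec u0)
    (hUeq : ∀ ω (u0 : Fin N → ℝ) (t : ℝ),
      (U ω t).mulVec u0 = u0 + ∫ s in (0:ℝ)..t, (A (θ s ω)).mulVec ((U ω s).mulVec u0))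
    (hO1 : ∀ ω (i j : Fin N), i ≠ j → 0 ≤ A ω i j) :
    (∀ ω (u0 : Fin N → ℝ) (t : ℝ), 0 ≤ t →
      l1norm ((U ω t).mulVec u0) ≤
        Real.exp (∫ τ in (0:ℝ)..t, ∑ i, ⨆ j, A (θ τ ω) i j) * l1norm u0) ∧
    (Integrable (fun ω => ⨆ i, ⨆ j, A ω i j) ℙ →
      Integrable (fun ω => ⨆ s : Icc (0:ℝ) 1, lnplus (eopNorm (U ω (s : ℝ)))) ℙ ∧
      Integrable (fun ω =>
        ⨆ s : Icc (0:ℝ) 1, lnplus (eopNorm (U (θ (s : ℝ) ω) (1 - (s : ℝ))))) ℙ) := by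
  have hU (ω : Ω) : IsFundamentalMatrix (fun t => A (θ t ω)) (U ω) :=
    .of_eopNorm (fun i j => (hAmeas i j).comp (hθjm.comp measurable_prodMk_right)) (hAloc ω)
      (hUcont ω) (hUeq ω)
  have hU_meas {t : ℝ} (ht : 0 ≤ t) (i j : Fin N) : Measurable fun ω => U ω t i j :=
    IsFundamentalMatrix.measurable_apply
      (fun i j => (hAmeas i j).comp (hθjm.comp measurable_swap)) hU ht i j
  refine ⟨fun ω u0 t ht => (hU ω).l1norm_mulVec_le (fun _ => hO1 _) ht u0, fun hA => ?_⟩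
  have hG : Integrable
      (fun ω => Real.log N + N * ∫ τ in (0:ℝ)..1, |⨆ i, ⨆ j, A (θ τ ω) i j|) ℙ :=
    (integrable_const _).add
      ((integrable_intervalIntegral_comp_of_measurePreserving hθjm hθmp hA.abs 0 1).const_mul _)
  constructor
  · refine integrable_iSup_lnplus_eopNorm (fun s => hU_meas s.2.1)
      (fun ω => (hU ω).continuous.comp continuous_subtype_val) hG fun s ω => ?_
    simpa [hθ0] using
      lnplus_eopNorm_flow_le hθadd hU hO1 le_rfl s.2.1 ((zero_add _).trans_le s.2.2) ω
  · refine integrable_iSup_lnplus_eopNorm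
      (fun s i j => (hU_meas (sub_nonneg.2 s.2.2) i j).comp (hθmp s).measurable)
      (fun ω => ((hU ω).continuousOn_apply_sub
        (IsFundamentalMatrix.comp_flow hθadd hU ω) 1).domRestrict) hG fun s ω => ?_
    exact lnplus_eopNorm_flow_le hθadd hU hO1 s.2.1 (sub_nonneg.2 s.2.2) (by simp) ω

/-- ℓ¹ a priori bound for random cooperative linear ODE systems, and
the resulting integrability conditions (B1)(i). -/
theorem stmt_13 {N : ℕ} (hN : 2 ≤ N)
    {Ω : Type*} [MeasurableSpace Ω] (ℙ : Measure Ω) [IsProbabilityMeasure ℙ]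
    [ℙ.IsComplete]
    (θ : ℝ → Ω → Ω) (hθ0 : θ 0 = id)
    (hθadd : ∀ s t : ℝ, θ (s + t) = θ s ∘ θ t)
    (hθjm : Measurable fun p : ℝ × Ω => θ p.1 p.2)
    (hθmp : ∀ t, MeasurePreserving (θ t) ℙ ℙ)
    (hθerg : ∀ F : Set Ω, MeasurableSet F → (∀ t, θ t ⁻¹' F = F) →
      ℙ F = 0 ∨ ℙ F = 1)
    (A : Ω → Matrix (Fin N) (Fin N) ℝ)
    (hAmeas : ∀ i j, Measurable fun ω => A ω i j)
    (hAloc : ∀ ω, ∀ a c : ℝ,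
      IntervalIntegrable (fun t => eopNorm (A (θ t ω))) volume a c)
    (U : Ω → ℝ → Matrix (Fin N) (Fin N) ℝ)
    (hUcont : ∀ ω (u0 : Fin N → ℝ), Continuous fun t : ℝ => (U ω t).mulVec u0)
    (hUeq : ∀ ω (u0 : Fin N → ℝ) (t : ℝ),
      (U ω t).mulVec u0 = u0 + ∫ s in (0:ℝ)..t, (A (θ s ω)).mulVec ((U ω s).mulVec u0))
    (hO1 : ∀ ω (i j : Fin N), i ≠ j → 0 ≤ A ω i j) :
    (∀ ω (u0 : Fin N → ℝ) (t : ℝ), 0 ≤ t →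
      l1norm ((U ω t).mulVec u0) ≤
        Real.exp (∫ τ in (0:ℝ)..t, ∑ i, ⨆ j, A (θ τ ω) i j) * l1norm u0) ∧
    (Integrable (fun ω => ⨆ i, ⨆ j, A ω i j) ℙ →
      Integrable (fun ω => ⨆ s : Set.Icc (0:ℝ) 1, lnplus (eopNorm (U ω (s : ℝ)))) ℙ ∧
      Integrable (fun ω =>
        ⨆ s : Set.Icc (0:ℝ) 1, lnplus (eopNorm (U (θ (s : ℝ) ω) (1 - (s : ℝ))))) ℙ) :=
  stmt_13_general ℙ θ hθ0 hθadd hθjm hθmp A hAmeas hAloc U hUcont hUeq hO1
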